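/- Let n ≥ 8 and m = n−4. In Sym(2n), define t₁ = (2,3)(n+2,n+3)(4,5)(n+4,n+5)∏_{i=6}^{n}(i,n+i), t₂ = (1,2)(n+1,n+2)(3,4)(n+3,n+4)(5,6)(n+5,n+6)∏_{i=7}^{n}(i,n+i), t₃ = (2,3)(n+2,n+3)(6,7)(n+6,n+7), and t_k = (k+3,k+4)(n+k+3,n+k+4) for 4 ≤ k ≤ m. Then t₁t₂ has order 12, t₂t₃ has order 12, t₃t₄ has order 6, tᵢtⱼ has order 3 when 4 ≤ i < j ≤ m with j = i+1, and tᵢtⱼ has order 2 whenever |i−j| ≥ 2. -/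

import Mathlib

open Equiv

/-- The generators `t₁, …, t_m` (`m = n − 4`) of the second family, as
permutations of `ℕ` (elements of `Sym(2n)` on `{1,…,2n}`):
`t₁ = (2,3)(n+2,n+3)(4,5)(n+4,n+5)∏_{i=6}^{n}(i,n+i)`,
`t₂ = (1,2)(n+1,n+2)(3,4)(n+3,n+4)(5,6)(n+5,n+6)∏_{i=7}^{n}(i,n+i)`,
`t₃ = (2,3)(n+2,n+3)(6,7)(n+6,n+7)`, and
`t_k = (k+3,k+4)(n+k+3,n+k+4)` for `k ≥ 4`. -/
def t (n k : ℕ) : Equiv.Perm ℕ :=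
  if k = 1 then
    Equiv.swap 2 3 * Equiv.swap (n+2) (n+3) * Equiv.swap 4 5 * Equiv.swap (n+4) (n+5) *
      ((List.range (n - 5)).map (fun j => Equiv.swap (6 + j) (n+6+j))).prod
  else if k = 2 then
    Equiv.swap 1 2 * Equiv.swap (n+1) (n+2) * Equiv.swap 3 4 * Equiv.swap (n+3) (n+4) *
      Equiv.swap 5 6 * Equiv.swap (n+5) (n+6) *
      ((List.range (n - 6)).map (fun j => Equiv.swap (7 + j) (n+7+j))).prod
  else if k = 3 then
    Equiv.swap 2 3 * Equiv.swap (n+2) (n+3) * Equiv.swap 6 7 * Equiv.swap (n+6) (n+7)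
  else
    Equiv.swap (k+3) (k+4) * Equiv.swap (n+k+3) (n+k+4)

/-- The product `t₁t₂⋯t_k` of the first `k` generators in increasing order. -/
def tProd (n k : ℕ) : Equiv.Perm ℕ :=
  ((List.range k).map (fun i => t n (i+1))).prod

/-- `∏_{i=1}^{k}(i, n+i)`. -/
def bigSwap (n k : ℕ) : Equiv.Perm ℕ :=
  ((List.range k).map (fun i => Equiv.swap (i+1) (n+(i+1)))).prod

theorem prodSwap_apply (n a k : ℕ) (hk : k ≤ n) (x : ℕ) :
    ((List.range k).map (fun j => Equiv.swap (a + j) (n+a+j))).prod x =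
      if a ≤ x ∧ x < a + k then x + n else if n + a ≤ x ∧ x < n + a + k then x - n else x := by
  induction k generalizing x with
  | zero =>
    rw [if_neg (by omega), if_neg (by omega)]
    rfl
  | succ k ih =>
    rw [List.range_succ, List.map_append, List.prod_append, Equiv.Perm.mul_apply]
    simp only [List.map_cons, List.map_nil, List.prod_cons, List.prod_nil, mul_one]
    rw [ih (by omega), Equiv.swap_apply_def]
    split_ifs <;> omega

theorem prodSwap_lo (n a k : ℕ) (hk : k ≤ n) (x : ℕ) (h : a ≤ x) (h' : x < a + k) :
    ((List.range k).map (fun j => Equiv.swap (a + j) (n+a+j))).prod x = x + n := by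
  rw [prodSwap_apply n a k hk, if_pos ⟨h, h'⟩]

theorem prodSwap_hi (n a k : ℕ) (hk : k ≤ n) (x : ℕ) (h : n + a ≤ x) (h' : x < n + a + k) :
    ((List.range k).map (fun j => Equiv.swap (a + j) (n+a+j))).prod x = x - n := by
  rw [prodSwap_apply n a k hk, if_neg (by omega), if_pos ⟨h, h'⟩]

theorem prodSwap_else (n a k : ℕ) (hk : k ≤ n) (x : ℕ) (h : ¬ (a ≤ x ∧ x < a + k))
    (h' : ¬ (n + a ≤ x ∧ x < n + a + k)) :
    ((List.range k).map (fun j => Equiv.swap (a + j) (n+a+j))).prod x = x := by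
  rw [prodSwap_apply n a k hk, if_neg h, if_neg h']

theorem t1_apply (n x : ℕ) (hn : 8 ≤ n) : t n 1 x =
    if x = 2 then 3 else if x = 3 then 2 else if x = 4 then 5 else if x = 5 then 4
    else if x = n+2 then n+3 else if x = n+3 then n+2 else if x = n+4 then n+5
    else if x = n+5 then n+4 else if 6 ≤ x ∧ x ≤ n then x + n
    else if n + 6 ≤ x ∧ x ≤ 2*n then x - n else x := by
  split_ifs <;> subst_vars <;>
  simp only [t, if_true, Equiv.Perm.mul_apply] <;>
    simp (disch := omega) only [prodSwap_lo, prodSwap_hi, prodSwap_else, Equiv.swap_apply_left,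
      Equiv.swap_apply_right, Equiv.swap_apply_of_ne_of_ne]

theorem t2_apply (n x : ℕ) (hn : 8 ≤ n) : t n 2 x =
    if x = 1 then 2 else if x = 2 then 1 else if x = 3 then 4 else if x = 4 then 3
    else if x = 5 then 6 else if x = 6 then 5
    else if x = n+1 then n+2 else if x = n+2 then n+1 else if x = n+3 then n+4
    else if x = n+4 then n+3 else if x = n+5 then n+6 else if x = n+6 then n+5
    else if 7 ≤ x ∧ x ≤ n then x + n
    else if n + 7 ≤ x ∧ x ≤ 2*n then x - n else x := by
  have hc : x = 1 ∨ x = 2 ∨ x = 3 ∨ x = 4 ∨ x = 5 ∨ x = 6 ∨ x = n+1 ∨ x = n+2 ∨ x = n+3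
      ∨ x = n+4 ∨ x = n+5 ∨ x = n+6 ∨ (7 ≤ x ∧ x ≤ n) ∨ (n + 7 ≤ x ∧ x ≤ 2*n)
      ∨ x = 0 ∨ 2 * n < x := by omega
  generalize hR : (if x = 1 then 2 else _) = R
  simp only [t, if_true, Equiv.Perm.mul_apply, OfNat.ofNat_ne_one, if_false]
  rcases hc with rfl | rfl | rfl | rfl | rfl | rfl | rfl | rfl | rfl | rfl | rfl | rfl | h | h |
      rfl | h
  all_goals
    simp (disch := clear hR; omega) only [prodSwap_lo, prodSwap_hi, prodSwap_else,
      Equiv.swap_apply_left, Equiv.swap_apply_right, Equiv.swap_apply_of_ne_of_ne]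
    grind (splits := 40)

theorem t3_apply (n x : ℕ) (hn : 8 ≤ n) : t n 3 x =
    if x = 2 then 3 else if x = 3 then 2 else if x = 6 then 7 else if x = 7 then 6
    else if x = n+2 then n+3 else if x = n+3 then n+2 else if x = n+6 then n+7
    else if x = n+7 then n+6 else x := by
  simp only [t, Equiv.Perm.mul_apply, OfNat.ofNat_ne_one, if_false, if_true, Nat.reduceEqDiff]
  split_ifs <;> subst_vars <;>
    simp (disch := omega) only [Equiv.swap_apply_left,
      Equiv.swap_apply_right, Equiv.swap_apply_of_ne_of_ne]

theorem tk_apply (n k x : ℕ) (hk : 4 ≤ k) (hkn : k + 4 ≤ n) : t n k x =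
    if x = k+3 then k+4 else if x = k+4 then k+3 
    else if x = n+k+3 then n+k+4 else if x = n+k+4 then n+k+3 else x := by
  simp only [t, if_neg (show k ≠ 1 by omega), if_neg (show k ≠ 2 by omega),
    if_neg (show k ≠ 3 by omega), Equiv.Perm.mul_apply]
  split_ifs <;> subst_vars <;>
    simp (disch := omega) only [Equiv.swap_apply_left,
      Equiv.swap_apply_right, Equiv.swap_apply_of_ne_of_ne]

theorem t_sq (n k : ℕ) (hn : 8 ≤ n) (h1 : 1 ≤ k) (hk : k + 4 ≤ n) : t n k * t n k = 1 := by
  ext x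
  rw [Equiv.Perm.mul_apply, Equiv.Perm.one_apply]
  have : k = 1 ∨ k = 2 ∨ k = 3 ∨ 4 ≤ k := by omega
  rcases this with rfl | rfl | rfl | h
  · have := t1_apply n x hn
    have := t1_apply n (t n 1 x) hn
    grind (splits := 60)
  · have := t2_apply n x hn
    have := t2_apply n (t n 2 x) hn
    grind (splits := 60)
  · have := t3_apply n x hn
    have := t3_apply n (t n 3 x) hn
    grind (splits := 60)
  · have := tk_apply n k x h hk
    have := tk_apply n k (t n k x) h hk
    grind (splits := 60)

theorem t_comm (n i j : ℕ) (hn : 8 ≤ n) (h1 : 1 ≤ i) (hij : i + 2 ≤ j) (hj : j + 4 ≤ n) :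
    t n i * t n j = t n j * t n i := by
  ext x
  rw [Equiv.Perm.mul_apply, Equiv.Perm.mul_apply]
  have hc : i = 1 ∨ i = 2 ∨ i = 3 ∨ 4 ≤ i := by omega
  rcases hc with rfl | rfl | rfl | h
  · have hj : j = 3 ∨ 4 ≤ j := by omega
    rcases hj with rfl | h4
    · have := t1_apply n x hn
      have := t3_apply n x hn
      have := t1_apply n (t n 3 x) hn
      have := t3_apply n (t n 1 x) hn
      grind (splits := 60)
    · have := t1_apply n x hn
      have := tk_apply n j x h4 (by omega)
      have := t1_apply n (t n j x) hn
      have := tk_apply n j (t n 1 x) h4 (by omega)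
      grind (splits := 60)
  · have := t2_apply n x hn
    have := tk_apply n j x (by omega) (by omega)
    have := t2_apply n (t n j x) hn
    have := tk_apply n j (t n 2 x) (by omega) (by omega)
    grind (splits := 60)
  · have := t3_apply n x hn
    have := tk_apply n j x (by omega) (by omega)
    have := t3_apply n (t n j x) hn
    have := tk_apply n j (t n 3 x) (by omega) (by omega)
    grind (splits := 60)
  · have := tk_apply n i x (by omega) (by omega)
    have := tk_apply n j x (by omega) (by omega)
    have := tk_apply n i (t n j x) (by omega) (by omega)
    have := tk_apply n j (t n i x) (by omega) (by omega)
    grind (splits := 60)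

theorem t_ne (n i j : ℕ) (hn : 8 ≤ n) (h1 : 1 ≤ i) (hij : i + 2 ≤ j) (hj : j + 4 ≤ n) :
    t n i ≠ t n j := by
  intro h
  have hc : i = 1 ∨ i = 2 ∨ i = 3 ∨ 4 ≤ i := by omega
  rcases hc with rfl | rfl | rfl | h4
  · have h' := DFunLike.congr_fun h 4
    rw [t1_apply n _ hn] at h'
    have hj : j = 3 ∨ 4 ≤ j := by omega
    rcases hj with rfl | h4
    · rw [t3_apply n _ hn] at h'; grind (splits := 60)
    · rw [tk_apply n j _ h4 (by omega)] at h'; grind (splits := 60)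
  · have h' := DFunLike.congr_fun h 1
    rw [t2_apply n _ hn, tk_apply n j _ (by omega) (by omega)] at h'; grind (splits := 60)
  · have h' := DFunLike.congr_fun h 2
    rw [t3_apply n _ hn, tk_apply n j _ (by omega) (by omega)] at h'; grind (splits := 60)
  · have h' := DFunLike.congr_fun h (i+3)
    rw [tk_apply n i _ (by omega) (by omega), tk_apply n j _ (by omega) (by omega)] at h'; grind (splits := 60)

theorem order_two (n i j : ℕ) (hn : 8 ≤ n) (h1 : 1 ≤ i) (hij : i + 2 ≤ j) (hj : j + 4 ≤ n) :
    orderOf (t n i * t n j) = 2 := by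
  apply orderOf_eq_prime
  · have hc : Commute (t n i) (t n j) := t_comm n i j hn h1 hij hj
    rw [hc.mul_pow, pow_two, pow_two, t_sq n i hn h1 (by omega), t_sq n j hn (by omega) hj, one_mul]
  · intro h
    apply t_ne n i j hn h1 hij hj
    calc t n i = t n i * (t n j * t n j) := by rw [t_sq n j hn (by omega) hj, mul_one]
      _ = t n j := by rw [← mul_assoc, h, one_mul]

theorem order_three (n i : ℕ) (h1 : 4 ≤ i) (hj : i + 5 ≤ n) :
    orderOf (t n i * t n (i+1)) = 3 := by
  have key (x : ℕ) : (t n i * t n (i+1)) x =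
      if x = i+3 then i+4 else if x = i+4 then i+5 else if x = i+5 then i+3 
      else if x = n+i+3 then n+i+4 else if x = n+i+4 then n+i+5
      else if x = n+i+5 then n+i+3 else x := by
    rw [Equiv.Perm.mul_apply, tk_apply n i _ (by omega) (by omega),
      tk_apply n (i+1) _ (by omega) (by omega)]
    grind (splits := 60)
  generalize t n i * t n (i+1) = p at key
  have : Fact (Nat.Prime 3) := ⟨Nat.prime_three⟩
  apply orderOf_eq_prime
  · ext x
    simp only [pow_succ, pow_zero, one_mul, Equiv.Perm.mul_apply, Equiv.Perm.one_apply]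
    have := key x
    have := key (p x)
    have := key (p (p x))
    grind (splits := 60)
  · intro h
    have := key (i+3)
    rw [h] at this
    simp at this

theorem order_six (n : ℕ) (hn : 8 ≤ n) : orderOf (t n 3 * t n 4) = 6 := by
  have key (x : ℕ) : (t n 3 * t n 4) x =
      if x = 2 then 3 else if x = 3 then 2 else if x = 6 then 7 else if x = 7 then 8
      else if x = 8 then 6 else if x = n+2 then n+3 else if x = n+3 then n+2
      else if x = n+6 then n+7 else if x = n+7 then n+8 else if x = n+8 then n+6 else x := by
    rw [Equiv.Perm.mul_apply, t3_apply n _ hn, tk_apply n 4 _ (by omega) (by omega)]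
    grind (splits := 60)
  generalize t n 3 * t n 4 = p at key
  have v2 : p 2 = 3 := by rw [key]; grind (splits := 60)
  have v3 : p 3 = 2 := by rw [key]; grind (splits := 60)
  have v6 : p 6 = 7 := by rw [key]; grind (splits := 60)
  have v7 : p 7 = 8 := by rw [key]; grind (splits := 60)
  have v8 : p 8 = 6 := by rw [key]; grind (splits := 60)
  have w2 : p (n+2) = n+3 := by rw [key]; grind (splits := 60)
  have w3 : p (n+3) = n+2 := by rw [key]; grind (splits := 60)
  have w6 : p (n+6) = n+7 := by rw [key]; grind (splits := 60)
  have w7 : p (n+7) = n+8 := by rw [key]; grind (splits := 60)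
  have w8 : p (n+8) = n+6 := by rw [key]; grind (splits := 60)
  apply orderOf_eq_of_pow_and_pow_div_prime (by norm_num)
  · ext x
    rw [Equiv.Perm.one_apply]
    by_cases hx : p x = x
    · exact Equiv.Perm.pow_apply_eq_self_of_apply_eq_self hx 6
    have hc : x = 2 ∨ x = 3 ∨ x = 6 ∨ x = 7 ∨ x = 8 ∨ x = n+2 ∨ x = n+3 ∨ x = n+6 ∨ x = n+7
        ∨ x = n+8 := by
      have := key x
      grind (splits := 60)
    clear key hx
    rcases hc with rfl | rfl | rfl | rfl | rfl | rfl | rfl | rfl | rfl | rfl <;>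
      simp only [pow_succ, pow_zero, one_mul, Equiv.Perm.mul_apply, *]
  · intro q hq hd h
    have : q = 2 ∨ q = 3 := by
      have := (Nat.Prime.dvd_mul hq).1 (show q ∣ 2 * 3 from hd)
      simpa [Nat.prime_dvd_prime_iff_eq hq, Nat.prime_two, Nat.prime_three] using this
    rcases this with rfl | rfl
    · have := DFunLike.congr_fun h 2
      norm_num [pow_succ, Equiv.Perm.mul_apply, v2, v3] at this
    · have := DFunLike.congr_fun h 6
      norm_num [pow_succ, Equiv.Perm.mul_apply, v6, v7, v8] at this

theorem prime_dvd_twelve (q : ℕ) (hq : q.Prime) (hd : q ∣ 12) : q = 2 ∨ q = 3 := by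
  have := (Nat.Prime.dvd_mul hq).1 (show q ∣ 2 ^ 2 * 3 from hd)
  rcases this with h | h
  · left; exact (Nat.prime_dvd_prime_iff_eq hq Nat.prime_two).1 (hq.dvd_of_dvd_pow h)
  · right; exact (Nat.prime_dvd_prime_iff_eq hq Nat.prime_three).1 h

theorem order_twelve_a (n : ℕ) (hn : 8 ≤ n) : orderOf (t n 1 * t n 2) = 12 := by
  have key (x : ℕ) : (t n 1 * t n 2) x = t n 1 (t n 2 x) := Equiv.Perm.mul_apply _ _ _
  generalize t n 1 * t n 2 = p at key
  have v1 : p 1 = 3 := by rw [key, t2_apply n _ hn, t1_apply n _ hn]; grind (splits := 60)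
  have v3 : p 3 = 5 := by rw [key, t2_apply n _ hn, t1_apply n _ hn]; grind (splits := 60)
  have v5 : p 5 = n+6 := by rw [key, t2_apply n _ hn, t1_apply n _ hn]; grind (splits := 60)
  have v6 : p 6 = 4 := by rw [key, t2_apply n _ hn, t1_apply n _ hn]; grind (splits := 60)
  have v4 : p 4 = 2 := by rw [key, t2_apply n _ hn, t1_apply n _ hn]; grind (splits := 60)
  have v2 : p 2 = 1 := by rw [key, t2_apply n _ hn, t1_apply n _ hn]; grind (splits := 60)
  have w1 : p (n+1) = n+3 := by rw [key, t2_apply n _ hn, t1_apply n _ hn]; grind (splits := 60)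
  have w3 : p (n+3) = n+5 := by rw [key, t2_apply n _ hn, t1_apply n _ hn]; grind (splits := 60)
  have w5 : p (n+5) = 6 := by rw [key, t2_apply n _ hn, t1_apply n _ hn]; grind (splits := 60)
  have w6 : p (n+6) = n+4 := by rw [key, t2_apply n _ hn, t1_apply n _ hn]; grind (splits := 60)
  have w4 : p (n+4) = n+2 := by rw [key, t2_apply n _ hn, t1_apply n _ hn]; grind (splits := 60)
  have w2 : p (n+2) = n+1 := by rw [key, t2_apply n _ hn, t1_apply n _ hn]; grind (splits := 60)
  apply orderOf_eq_of_pow_and_pow_div_prime (by norm_num)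
  · ext x
    rw [Equiv.Perm.one_apply]
    by_cases hx : p x = x
    · exact Equiv.Perm.pow_apply_eq_self_of_apply_eq_self hx 12
    have hc : x = 1 ∨ x = 2 ∨ x = 3 ∨ x = 4 ∨ x = 5 ∨ x = 6 ∨ x = n+1 ∨ x = n+2 ∨ x = n+3
        ∨ x = n+4 ∨ x = n+5 ∨ x = n+6 := by
      by_contra hcon
      apply hx
      have := t2_apply n x hn
      have := t1_apply n (t n 2 x) hn
      rw [key]
      grind (splits := 60)
    clear key hx
    rcases hc with rfl | rfl | rfl | rfl | rfl | rfl | rfl | rfl | rfl | rfl | rfl | rfl <;>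
      simp only [pow_succ, pow_zero, one_mul, Equiv.Perm.mul_apply, *]
  · intro q hq hd h
    rcases prime_dvd_twelve q hq hd with rfl | rfl
    · have := DFunLike.congr_fun h 1
      norm_num [pow_succ, Equiv.Perm.mul_apply, v1, v2, v3, v4, v5, v6, w1, w2, w3, w4, w5, w6] at this
      try omega
    · have := DFunLike.congr_fun h 1
      norm_num [pow_succ, Equiv.Perm.mul_apply, v1, v2, v3, v4, v5, v6, w1, w2, w3, w4, w5, w6] at this
      try omega

theorem order_twelve_b (n : ℕ) (hn : 8 ≤ n) : orderOf (t n 2 * t n 3) = 12 := by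
  have key (x : ℕ) : (t n 2 * t n 3) x = t n 2 (t n 3 x) := Equiv.Perm.mul_apply _ _ _
  generalize t n 2 * t n 3 = p at key
  have v1 : p 1 = 2 := by rw [key, t3_apply n _ hn, t2_apply n _ hn]; grind (splits := 60)
  have v2 : p 2 = 4 := by rw [key, t3_apply n _ hn, t2_apply n _ hn]; grind (splits := 60)
  have v4 : p 4 = 3 := by rw [key, t3_apply n _ hn, t2_apply n _ hn]; grind (splits := 60)
  have v3 : p 3 = 1 := by rw [key, t3_apply n _ hn, t2_apply n _ hn]; grind (splits := 60)
  have v5 : p 5 = 6 := by rw [key, t3_apply n _ hn, t2_apply n _ hn]; grind (splits := 60)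
  have v6 : p 6 = n+7 := by rw [key, t3_apply n _ hn, t2_apply n _ hn]; grind (splits := 60)
  have v7 : p 7 = 5 := by rw [key, t3_apply n _ hn, t2_apply n _ hn]; grind (splits := 60)
  have w1 : p (n+1) = n+2 := by rw [key, t3_apply n _ hn, t2_apply n _ hn]; grind (splits := 60)
  have w2 : p (n+2) = n+4 := by rw [key, t3_apply n _ hn, t2_apply n _ hn]; grind (splits := 60)
  have w4 : p (n+4) = n+3 := by rw [key, t3_apply n _ hn, t2_apply n _ hn]; grind (splits := 60)
  have w3 : p (n+3) = n+1 := by rw [key, t3_apply n _ hn, t2_apply n _ hn]; grind (splits := 60)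
  have w5 : p (n+5) = n+6 := by rw [key, t3_apply n _ hn, t2_apply n _ hn]; grind (splits := 60)
  have w6 : p (n+6) = 7 := by rw [key, t3_apply n _ hn, t2_apply n _ hn]; grind (splits := 60)
  have w7 : p (n+7) = n+5 := by rw [key, t3_apply n _ hn, t2_apply n _ hn]; grind (splits := 60)
  have u (x : ℕ) (h : 8 ≤ x ∧ x ≤ n) : p x = n + x := by
    rw [key, t3_apply n _ hn, t2_apply n _ hn]; grind (splits := 60)
  have u' (x : ℕ) (h : 8 ≤ x ∧ x ≤ n) : p (n + x) = x := by
    rw [key, t3_apply n _ hn, t2_apply n _ hn]; grind (splits := 60)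
  apply orderOf_eq_of_pow_and_pow_div_prime (by norm_num)
  · ext x
    rw [Equiv.Perm.one_apply]
    by_cases h8 : 8 ≤ x ∧ x ≤ n
    · simp only [pow_succ, pow_zero, one_mul, Equiv.Perm.mul_apply, u x h8, u' x h8]
    by_cases h8' : n + 8 ≤ x ∧ x ≤ n + n
    · obtain ⟨y, rfl⟩ := Nat.exists_eq_add_of_le (show n ≤ x by omega)
      have hy : 8 ≤ y ∧ y ≤ n := by omega
      simp only [pow_succ, pow_zero, one_mul, Equiv.Perm.mul_apply, u y hy, u' y hy]
    by_cases hx : p x = x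
    · exact Equiv.Perm.pow_apply_eq_self_of_apply_eq_self hx 12
    have hc : x = 1 ∨ x = 2 ∨ x = 3 ∨ x = 4 ∨ x = 5 ∨ x = 6 ∨ x = 7 ∨ x = n+1 ∨ x = n+2 ∨ x = n+3
        ∨ x = n+4 ∨ x = n+5 ∨ x = n+6 ∨ x = n+7 := by
      by_contra hcon
      apply hx
      have := t3_apply n x hn
      have := t2_apply n (t n 3 x) hn
      rw [key]
      grind (splits := 60)
    clear u u' h8 h8'
    clear key hx
    rcases hc with rfl | rfl | rfl | rfl | rfl | rfl | rfl | rfl | rfl | rfl | rfl | rfl | rfl | rfl <;>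
      simp only [pow_succ, pow_zero, one_mul, Equiv.Perm.mul_apply, *]
  · intro q hq hd h
    rcases prime_dvd_twelve q hq hd with rfl | rfl
    · have := DFunLike.congr_fun h 1
      norm_num [pow_succ, Equiv.Perm.mul_apply, v1, v2, v3, v4] at this
    · have := DFunLike.congr_fun h 5
      norm_num [pow_succ, Equiv.Perm.mul_apply, v5, v6, v7, w5, w6, w7] at this
      try omega

/-- Orders of products of consecutive/distant generators of the second family:
`t₁t₂` and `t₂t₃` have order `12`, `t₃t₄` has order `6`, `tᵢt_{i+1}` has
order `3` for `4 ≤ i < i+1 ≤ m`, and `tᵢtⱼ` has order `2` when `|i−j| ≥ 2`. -/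
theorem orders_of_products (n : ℕ) (hn : 8 ≤ n) (m : ℕ) (hm : m = n - 4) :
    orderOf (t n 1 * t n 2) = 12 ∧
    orderOf (t n 2 * t n 3) = 12 ∧
    orderOf (t n 3 * t n 4) = 6 ∧
    (∀ i, 4 ≤ i → i + 1 ≤ m → orderOf (t n i * t n (i+1)) = 3) ∧
    (∀ i j, 1 ≤ i → i ≤ m → 1 ≤ j → j ≤ m → 2 ≤ Nat.dist i j →
      orderOf (t n i * t n j) = 2) := by
  subst hm
  refine ⟨order_twelve_a n hn, order_twelve_b n hn, order_six n hn,
    fun i h4 hi => order_three n i h4 (by omega), fun i j h1 hi h2 hj hd => ?_⟩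
  have hd' : i + 2 ≤ j ∨ j + 2 ≤ i := by
    unfold Nat.dist at hd; omega
  rcases hd' with h | h
  · exact order_two n i j hn h1 h (by omega)
  · rw [← t_comm n j i hn h2 h (by omega)]
    exact order_two n j i hn h2 h (by omega)
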